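/- Let d ≥ 2, δ ≥ 2, and 0 < s < d be integers, and let G be a finite simple graph with a proper white/black 2-coloring. Suppose there exists a set X of edges of G such that every white vertex of degree exactly d is incident to at most d−1 edges of X, and every black vertex of degree exactly δ is incident to at least one edge of X. Then there exists a labeling of the edges of G solving FDSO(s). -/

import Mathlib

/-- The four-letter alphabet `Σ = {A, H, T, X}`. -/
inductive Sig : Type
  | A | H | T | X
deriving DecidableEq

instance : Fintype Sig where
  elems := {Sig.A, Sig.H, Sig.T, Sig.X}
  complete := by intro x; cases x <;> decide

/-- The multiset of labels assigned by `c` to the edges incident to `v`. -/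
def edgeLabels {V : Type*} [Fintype V] [DecidableEq V] (G : SimpleGraph V)
    [DecidableRel G.Adj] (c : Sym2 V → Sig) (v : V) : Multiset Sig :=
  (G.neighborFinset v).val.map (fun u => c s(v, u))

/-- The edge labeling `c` solves `FDSO(s)` on the properly 2-colored graph `G`: every white
vertex of degree exactly `d` sees one `A` and `d-1` `X`'s, or `s+1` `H`'s and `d-s-1` `X`'s,
or `d-s+1` `T`'s and `s-1` `X`'s; every black vertex of degree exactly `δ` sees at least one
`X`, or at least one `H` and at least one `T`. -/
def SolvesFDSO {V : Type*} [Fintype V] [DecidableEq V] (G : SimpleGraph V)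
    [DecidableRel G.Adj] (color : V → Bool) (d δ s : ℕ) (c : Sym2 V → Sig) : Prop :=
  (∀ v : V, color v = true → G.degree v = d →
    (edgeLabels G c v = Sig.A ::ₘ Multiset.replicate (d - 1) Sig.X ∨
     edgeLabels G c v =
       Multiset.replicate (s + 1) Sig.H + Multiset.replicate (d - s - 1) Sig.X ∨
     edgeLabels G c v =
       Multiset.replicate (d - s + 1) Sig.T + Multiset.replicate (s - 1) Sig.X)) ∧
  (∀ v : V, color v = false → G.degree v = δ →
    (Sig.X ∈ edgeLabels G c v ∨
      (Sig.H ∈ edgeLabels G c v ∧ Sig.T ∈ edgeLabels G c v)))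

/-- The number of edges of `X` incident to `v` (edges of the graph `G`). -/
def degIn {V : Type*} [Fintype V] [DecidableEq V] (G : SimpleGraph V) [DecidableRel G.Adj]
    (X : Finset (Sym2 V)) (v : V) : ℕ :=
  ((G.neighborFinset v).filter (fun u => s(v, u) ∈ X)).card

/-!
A white vertex of degree `d` has at most `d - 1` incident edges in the given set `X`, so it can
select an incident edge outside this set. Label the selected edges with the letter `A` and all other
edges with the letter `X`. White vertices are pairwise non-adjacent, so the only `A` that a white
vertex sees is on the edge it selected itself. A black vertex of degree `δ` has an incident edge in
the given set; nobody selected this edge, so it carries the letter `X`.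
-/

/-- The labeling built from a set `M` of selected edges: `A` on the edges of `M`, and `X` on all
other pairs of vertices. -/
def selectionLabeling {V : Type*} (M : Set (Sym2 V)) [DecidablePred (· ∈ M)] (e : Sym2 V) : Sig :=
  if e ∈ M then Sig.A else Sig.X

section

variable {V : Type*} [Fintype V] [DecidableEq V] {G : SimpleGraph V} [DecidableRel G.Adj]

theorem mem_edgeLabels {c : Sym2 V → Sig} {v : V} {a : Sig} :
    a ∈ edgeLabels G c v ↔ ∃ u, G.Adj v u ∧ c s(v, u) = a := by
  simp [edgeLabels]

theorem edgeLabels_eq_cons_replicate {c : Sym2 V → Sig} {v u : V} {b : Sig} (hu : G.Adj v u)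
    (hb : ∀ w, G.Adj v w → w ≠ u → c s(v, w) = b) :
    edgeLabels G c v = c s(v, u) ::ₘ Multiset.replicate (G.degree v - 1) b := by
  have hmem : u ∈ G.neighborFinset v := (G.mem_neighborFinset v u).2 hu
  have hrest : ((G.neighborFinset v).erase u).val.map (fun w => c s(v, w)) =
      Multiset.replicate (G.degree v - 1) b := by
    refine Multiset.eq_replicate.2 ⟨?_, fun a ha => ?_⟩
    · rw [Multiset.card_map, Finset.card_val, Finset.card_erase_of_mem hmem,
        G.card_neighborFinset_eq_degree]
    · obtain ⟨w, hw, rfl⟩ := Multiset.mem_map.1 ha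
      rw [Finset.mem_val, Finset.mem_erase, G.mem_neighborFinset] at hw
      exact hb w hw.2 hw.1
  rw [edgeLabels, ← Finset.insert_erase hmem,
    Finset.insert_val_of_notMem (Finset.notMem_erase u _), Multiset.map_cons, hrest]

theorem degIn_pos_iff {X : Finset (Sym2 V)} {v : V} :
    0 < degIn G X v ↔ ∃ u, G.Adj v u ∧ s(v, u) ∈ X := by
  simp [degIn, Finset.card_pos, Finset.Nonempty]

theorem degIn_lt_degree_iff {X : Finset (Sym2 V)} {v : V} :
    degIn G X v < G.degree v ↔ ∃ u, G.Adj v u ∧ s(v, u) ∉ X := by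
  rw [degIn, ← G.card_neighborFinset_eq_degree,
    (Finset.card_filter_le _ _).lt_iff_ne, Ne, Finset.card_filter_eq_iff]
  simp

theorem exists_disjoint_existsUnique_incident {X : Finset (Sym2 V)} {W : Set V}
    (hW : G.IsIndepSet W) (hX : ∀ w ∈ W, degIn G X w < G.degree w) :
    ∃ M : Set (Sym2 V), Disjoint (X : Set (Sym2 V)) M ∧
      ∀ w ∈ W, ∃! u, G.Adj w u ∧ s(w, u) ∈ M := by
  choose! f hadj hfX using fun w hw => degIn_lt_degree_iff.1 (hX w hw)
  refine ⟨(fun w => s(w, f w)) '' W, ?_, fun v hv => ⟨f v, ⟨hadj v hv, v, hv, rfl⟩, ?_⟩⟩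
  · rw [Set.disjoint_right]
    rintro _ ⟨w, hw, rfl⟩
    exact hfX w hw
  · rintro u ⟨hvu, w, hw, he⟩
    rcases Sym2.eq_iff.1 he with ⟨rfl, hfw⟩ | ⟨rfl, -⟩
    · exact hfw.symm
    · exact absurd hvu (hW hv hw hvu.ne)

theorem edgeLabels_selectionLabeling {M : Set (Sym2 V)} [DecidablePred (· ∈ M)] {v : V}
    (hM : ∃! u, G.Adj v u ∧ s(v, u) ∈ M) :
    edgeLabels G (selectionLabeling M) v =
      Sig.A ::ₘ Multiset.replicate (G.degree v - 1) Sig.X := by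
  obtain ⟨u, ⟨hvu, huM⟩, huniq⟩ := hM
  have hA : selectionLabeling M s(v, u) = Sig.A := if_pos huM
  rw [← hA]
  exact edgeLabels_eq_cons_replicate hvu fun w hvw hwu =>
    if_neg fun hwM => hwu (huniq w ⟨hvw, hwM⟩)

theorem X_mem_edgeLabels_selectionLabeling {M : Set (Sym2 V)} [DecidablePred (· ∈ M)] {v : V} :
    Sig.X ∈ edgeLabels G (selectionLabeling M) v ↔ ∃ u, G.Adj v u ∧ s(v, u) ∉ M := by
  simp [mem_edgeLabels, selectionLabeling]

theorem stmt_16_general {color : V → Bool} {d δ : ℕ} (s : ℕ) {X : Finset (Sym2 V)}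
    (hindep : G.IsIndepSet {v | color v = true ∧ G.degree v = d})
    (hwhite : ∀ v, color v = true → G.degree v = d → degIn G X v < d)
    (hblack : ∀ v, color v = false → G.degree v = δ → 0 < degIn G X v) :
    ∃ c : Sym2 V → Sig, SolvesFDSO G color d δ s c := by
  classical
  obtain ⟨M, hXM, hM⟩ := exists_disjoint_existsUnique_incident hindep
    fun w ⟨hw, hwd⟩ => (hwhite w hw hwd).trans_eq hwd.symm
  refine ⟨selectionLabeling M, fun v hv hvd => .inl ?_, fun v hv hvδ => .inl ?_⟩
  · rw [← hvd]
    exact edgeLabels_selectionLabeling (hM v ⟨hv, hvd⟩)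
  · obtain ⟨u, hvu, huX⟩ := degIn_pos_iff.1 (hblack v hv hvδ)
    exact X_mem_edgeLabels_selectionLabeling.2 ⟨u, hvu, Set.disjoint_left.1 hXM huX⟩

end

/-- If a properly 2-colored finite graph admits a solution to the bipartite
sinkless orientation problem (white degree-`d` vertices incident to at most `d-1` edges of
`X`; black degree-`δ` vertices incident to at least one edge of `X`), then it admits an edge
labeling solving `FDSO(s)`. -/
theorem stmt_16 {V : Type*} [Fintype V] [DecidableEq V]
    (G : SimpleGraph V) [DecidableRel G.Adj]
    (d δ s : ℕ) (hd : 2 ≤ d) (hδ : 2 ≤ δ) (hs0 : 0 < s) (hsd : s < d)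
    (color : V → Bool)
    (hproper : ∀ ⦃u v : V⦄, G.Adj u v → color u ≠ color v)
    (hX : ∃ X : Finset (Sym2 V), ↑X ⊆ G.edgeSet ∧
      (∀ v : V, color v = true → G.degree v = d → degIn G X v ≤ d - 1) ∧
      (∀ v : V, color v = false → G.degree v = δ → 1 ≤ degIn G X v)) :
    ∃ c : Sym2 V → Sig, SolvesFDSO G color d δ s c := by
  obtain ⟨X, -, hwhite, hblack⟩ := hX
  exact stmt_16_general s (fun v hv w hw _ hvw => hproper hvw (hv.1.trans hw.1.symm))
    (fun v hv hvd => (hwhite v hv hvd).trans_lt (by omega)) hblack
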